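/- arXiv:1304.4477 — 2 statements merged into one kernel-verified Lean document; each statement's English description precedes it below -/
import Mathlib

section
/- For every integer k ≥ 1, with M = {1,…,2k}, there exists a real symmetric 2k×2k matrix G with zero diagonal such that for every subset J ⊆ {1,…,2k−1} with |J| = k, the k×k submatrix G_{J, M∖J} is invertible. -/
open Matrix Finset

/-!
Put `G i j = 1 / (x i + x j)` off the diagonal, with the numbers `x i ^ 2` pairwise distinct, so
that the denominators do not vanish. Rows `s` and columns `t` of `G` with `s` and `t` disjoint avoid
the diagonal and hence form a Cauchy matrix. If `v` is in the kernel of a Cauchy matrix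
`1 / (x i + y j)`, then by the barycentric formula the polynomial interpolating suitable nonzero
multiples of the `v j` at the nodes `-y j` vanishes at every `x i`. When there are at least as many
rows as columns, it has too many roots for its degree, so it is zero, and so is `v`.
-/

section Invertibility

variable {K m n : Type*} [Field K] [Fintype m] [Fintype n] [DecidableEq n]

theorem exists_mul_eq_one_of_mulVec_injective {A : Matrix m n K}
    (hA : Function.Injective A.mulVec) : ∃ B : Matrix n m K, B * A = 1 := by
  classical
  obtain ⟨g, hg⟩ := (toLin' A).exists_leftInverse_of_injective (LinearMap.ker_eq_bot.2 hA)
  refine ⟨LinearMap.toMatrix' g, ?_⟩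
  rw [← LinearMap.toMatrix'_toLin' A, ← LinearMap.toMatrix'_comp, hg, LinearMap.toMatrix'_id]

theorem exists_two_sided_inverse_of_mulVec_injective [DecidableEq m]
    (hmn : Fintype.card m = Fintype.card n) {A : Matrix m n K}
    (hA : Function.Injective A.mulVec) : ∃ B : Matrix n m K, A * B = 1 ∧ B * A = 1 := by
  obtain ⟨B, hBA⟩ := exists_mul_eq_one_of_mulVec_injective hA
  exact ⟨B, (mul_eq_one_comm_of_card_eq _ _ _ hmn).2 hBA, hBA⟩

end Invertibility

section CauchyMatrix

variable {K l m n : Type*} [Field K]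

/-- The Cauchy matrix with entries `1 / (x i + y j)`. The sign convention makes `cauchyMatrix x x`
symmetric; an entry whose denominator vanishes is `0`. -/
def cauchyMatrix (x : m → K) (y : n → K) : Matrix m n K :=
  of fun i j => (x i + y j)⁻¹

theorem eval_interpolate_neg_eq_mul_cauchyMatrix_mulVec [Fintype n] [DecidableEq n]
    {x : m → K} {y : n → K} (hy : Function.Injective y) (hxy : ∀ i j, x i + y j ≠ 0)
    (v : n → K) (i : m) :
    (Lagrange.interpolate univ (-y)
        fun j => v j / Lagrange.nodalWeight univ (-y) j).eval (x i) =
      (Lagrange.nodal univ (-y)).eval (x i) * (cauchyMatrix x y *ᵥ v) i := by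
  have h_node (j : n) : x i ≠ (-y) j := fun h => hxy i j (eq_neg_iff_add_eq_zero.1 h)
  rw [Lagrange.eval_interpolate_not_at_node _ fun j _ => h_node j]
  congr 1
  refine sum_congr rfl fun j _ => ?_
  have hw : Lagrange.nodalWeight univ (-y) j ≠ 0 :=
    Lagrange.nodalWeight_ne_zero (neg_injective.comp hy).injOn (mem_univ j)
  simp only [cauchyMatrix, of_apply, Pi.neg_apply, sub_neg_eq_add]
  field_simp

theorem cauchyMatrix_mulVec_injective [Fintype m] [Fintype n]
    (hnm : Fintype.card n ≤ Fintype.card m) {x : m → K} {y : n → K}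
    (hx : Function.Injective x) (hy : Function.Injective y) (hxy : ∀ i j, x i + y j ≠ 0) :
    Function.Injective (cauchyMatrix x y).mulVec := by
  classical
  refine (injective_iff_map_eq_zero (cauchyMatrix x y).mulVecLin).2 fun v hv => ?_
  have hy' : Set.InjOn (-y) (univ : Finset n) := (neg_injective.comp hy).injOn
  let r : n → K := fun j => v j / Lagrange.nodalWeight univ (-y) j
  let p : Polynomial K := Lagrange.interpolate univ (-y) r
  have h_root (i : m) : p.eval (x i) = 0 := by
    rw [eval_interpolate_neg_eq_mul_cauchyMatrix_mulVec hy hxy, ← mulVecLin_apply, hv,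
      Pi.zero_apply, mul_zero]
  have h_degree : p.degree < #(univ : Finset m) :=
    (Lagrange.degree_interpolate_lt _ hy').trans_le (by exact_mod_cast hnm)
  have hp_zero : p = 0 :=
    Polynomial.eq_zero_of_degree_lt_of_eval_index_eq_zero univ hx.injOn h_degree
      fun i _ => h_root i
  funext j
  have h_value : r j = 0 :=
    calc
      r j = p.eval ((-y) j) := (Lagrange.eval_interpolate_at_node r hy' (mem_univ j)).symm
      _ = 0 := by rw [hp_zero, Polynomial.eval_zero]
  exact (div_eq_zero_iff.1 h_value).resolve_right (Lagrange.nodalWeight_ne_zero hy' (mem_univ j))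

/-- The symmetric Cauchy matrix `1 / (x i + x j)` with its diagonal replaced by zeros: the weighted
graph whose blocks on disjoint sets of rows and columns are Cauchy matrices. -/
def hollowCauchyMatrix [DecidableEq n] (x : n → K) : Matrix n n K :=
  of fun i j => if i = j then 0 else (x i + x j)⁻¹

theorem hollowCauchyMatrix_isSymm [DecidableEq n] (x : n → K) : (hollowCauchyMatrix x).IsSymm :=
  IsSymm.ext fun i j => by
    simp only [hollowCauchyMatrix, of_apply, eq_comm (a := j), add_comm (x j)]

theorem hollowCauchyMatrix_apply_self [DecidableEq n] (x : n → K) (i : n) :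
    hollowCauchyMatrix x i i = 0 :=
  if_pos rfl

theorem hollowCauchyMatrix_submatrix [DecidableEq n] (x : n → K) {f : l → n} {g : m → n}
    (hfg : ∀ i j, f i ≠ g j) :
    (hollowCauchyMatrix x).submatrix f g = cauchyMatrix (x ∘ f) (x ∘ g) :=
  Matrix.ext fun i j => if_neg (hfg i j)

theorem hollowCauchyMatrix_submatrix_mulVec_injective [DecidableEq n] {x : n → K}
    (hx : Function.Injective fun i => x i ^ 2) {s t : Finset n} (hst : Disjoint s t)
    (hcard : #t ≤ #s) :
    Function.Injective
      ((hollowCauchyMatrix x).submatrix (Subtype.val : s → n) (Subtype.val : t → n)).mulVec := by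
  have h_ne (i : s) (j : t) : (i : n) ≠ j := disjoint_iff_ne.1 hst i i.2 j j.2
  have hx' : Function.Injective x := Function.Injective.of_comp (f := (· ^ 2)) hx
  have h_add (i : s) (j : t) : x i + x j ≠ 0 := fun h =>
    h_ne i j <| hx <| sq_eq_sq_iff_eq_or_eq_neg.2 <| .inr <| eq_neg_of_add_eq_zero_left h
  rw [hollowCauchyMatrix_submatrix x h_ne]
  exact cauchyMatrix_mulVec_injective (by simpa only [Fintype.card_coe] using hcard)
    (hx'.comp Subtype.val_injective) (hx'.comp Subtype.val_injective) h_add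

end CauchyMatrix

theorem infinite_range_pow {R : Type*} [CommRing R] [IsDomain R] [Infinite R] {n : ℕ}
    (hn : 0 < n) : (Set.range fun a : R => a ^ n).Infinite := by
  intro h_range
  have h_fiber (b : R) : ((· ^ n) ⁻¹' {b} : Set R).Finite :=
    (Polynomial.nthRootsFinset n b).finite_toSet.subset fun a ha =>
      (Polynomial.mem_nthRootsFinset hn b).2 ha
  refine Set.infinite_univ (α := R) ?_
  rw [← Set.preimage_range fun a : R => a ^ n]
  exact h_range.preimage' fun b _ => h_fiber b

theorem exists_injective_pow (ι R : Type*) [Countable ι] [CommRing R] [IsDomain R] [Infinite R]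
    {n : ℕ} (hn : 0 < n) : ∃ x : ι → R, Function.Injective fun i => x i ^ n := by
  obtain ⟨e, he⟩ := exists_injective_nat ι
  let u := (infinite_range_pow (R := R) hn).natEmbedding
  choose x hx using fun i => (u (e i)).2
  refine ⟨x, ?_⟩
  simp only [hx]
  exact Subtype.val_injective.comp (u.injective.comp he)

theorem stmt5_general (K n : Type*) [Field K] [Infinite K] [Countable n] [DecidableEq n] :
    ∃ G : Matrix n n K, G.IsSymm ∧ (∀ i, G i i = 0) ∧
      ∀ s t : Finset n, Disjoint s t → #s = #t →
        ∃ B : Matrix t s K,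
          G.submatrix (Subtype.val : s → n) (Subtype.val : t → n) * B = 1 ∧
          B * G.submatrix (Subtype.val : s → n) (Subtype.val : t → n) = 1 := by
  obtain ⟨x, hx⟩ := exists_injective_pow n K two_pos
  refine ⟨hollowCauchyMatrix x, hollowCauchyMatrix_isSymm x, hollowCauchyMatrix_apply_self x,
    fun s t hst hcard => ?_⟩
  exact exists_two_sided_inverse_of_mulVec_injective
    (by simpa only [Fintype.card_coe] using hcard)
    (hollowCauchyMatrix_submatrix_mulVec_injective hx hst hcard.ge)

/-- For every integer `k ≥ 1`, with `M = {1,…,2k}`, there exists a real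
symmetric `2k × 2k` matrix `G` with zero diagonal such that for every subset `J ⊆ {1,…,2k−1}`
with `|J| = k`, the `k × k` submatrix `G_{J, M∖J}` is invertible. -/
theorem stmt5 (k : ℕ) (hk : 1 ≤ k) :
    ∃ G : Matrix (Fin (2 * k)) (Fin (2 * k)) ℝ,
      G.IsSymm ∧ (∀ i, G i i = 0) ∧
      ∀ J : Finset (Fin (2 * k)), (∀ j ∈ J, (j : ℕ) < 2 * k - 1) → J.card = k →
        ∃ B : Matrix {x // x ∈ Jᶜ} {x // x ∈ J} ℝ,
          (Matrix.of fun (j : {x // x ∈ J}) (i : {x // x ∈ Jᶜ}) => G j.1 i.1) * B = 1 ∧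
          B * (Matrix.of fun (j : {x // x ∈ J}) (i : {x // x ∈ Jᶜ}) => G j.1 i.1) = 1 := by
  obtain ⟨G, hG_symm, hG_diag, hG⟩ := stmt5_general ℝ (Fin (2 * k))
  exact ⟨G, hG_symm, hG_diag, fun J _ hJ => hG J Jᶜ disjoint_compl_right <| by
    rw [card_compl, Fintype.card_fin]; omega⟩
end

section
/- Let n ≥ 1, let G be a real symmetric (n+1)×(n+1) matrix with last column g ∈ ℝ^{n+1}, and let J and K be disjoint subsets of {1,…,n}. Suppose that there exist a, b ∈ ℝ^n supported on J with (a;1) + G(b;0) = 0 and there exist a', b' ∈ ℝ^n supported on J with (a';0) + G(b';0) = g (i.e. the player group J can perfectly reconstruct both quadratures of the quantum secret). Then there exist no vectors a, b ∈ ℝ^n supported on K with (a;1) + G(b;0) = 0, and there exist no vectors a', b' ∈ ℝ^n supported on K with (a';0) + G(b';0) = g (i.e. the disjoint group K can perfectly reconstruct neither quadrature, and hence obtains no information about the secret). -/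
open Matrix Finset

/-!
For symmetric `G` the solutions `(x, y)` of `x + G y = 0` form an isotropic subspace for the
symplectic form `x ⬝ y' - x' ⬝ y`. Reconstructing the combination of the two quadratures of the
secret with coefficients `t` and `s` means solving `(a;t) + G(b;0) = s g`, that is,
`(a;t) + G(b;-s) = 0`. For two such solutions isotropy reads `a ⬝ b' - a' ⬝ b = t s' - t' s`: up to
sign, the operators measured by the players have the same commutator as the combinations they
reconstruct. For disjoint groups the left side vanishes, so what they reconstruct must commute,
unlike the two quadratures.
-/

lemma dotProduct_eq_zero_of_disjoint {ι R : Type*} [Fintype ι] [NonUnitalNonAssocSemiring R]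
    {J K : Finset ι} (hJK : Disjoint J K) {u v : ι → R}
    (hu : ∀ l, l ∉ J → u l = 0) (hv : ∀ l, l ∉ K → v l = 0) : u ⬝ᵥ v = 0 := by
  refine sum_eq_zero fun l _ ↦ ?_
  by_cases hl : l ∈ J
  · rw [hv l (disjoint_left.mp hJK hl), mul_zero]
  · rw [hu l hl, zero_mul]

lemma snoc_dotProduct_snoc {n : ℕ} {R : Type*} [NonUnitalNonAssocSemiring R]
    (u v : Fin n → R) (s t : R) :
    (Fin.snoc u s : Fin (n + 1) → R) ⬝ᵥ Fin.snoc v t = u ⬝ᵥ v + s * t := by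
  simp [dotProduct, Fin.sum_univ_castSucc]

section CommRing

variable {R : Type*} [CommRing R]

lemma dotProduct_eq_of_add_mulVec_eq_zero {ι : Type*} [Fintype ι] {G : Matrix ι ι R}
    (hG : G.IsSymm) {x y x' y' : ι → R} (h : x + G *ᵥ y = 0) (h' : x' + G *ᵥ y' = 0) :
    x ⬝ᵥ y' = x' ⬝ᵥ y := by
  rw [eq_neg_of_add_eq_zero_left h, eq_neg_of_add_eq_zero_left h', neg_dotProduct,
    neg_dotProduct, dotProduct_comm, dotProduct_mulVec, ← mulVec_transpose, hG.eq]

variable {n : ℕ} {G : Matrix (Fin (n + 1)) (Fin (n + 1)) R}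

lemma mulVec_snoc_neg (G : Matrix (Fin (n + 1)) (Fin (n + 1)) R) (b : Fin n → R) (s : R) :
    G *ᵥ Fin.snoc b (-s) = G *ᵥ Fin.snoc b 0 - s • G.col (Fin.last n) := by
  have snoc_eq : (Fin.snoc b (-s) : Fin (n + 1) → R) =
      Fin.snoc b 0 - s • Pi.single (Fin.last n) 1 := by
    ext i
    cases i using Fin.lastCases <;> simp
  rw [snoc_eq, mulVec_sub, mulVec_smul, mulVec_single_one]

lemma snoc_add_mulVec_snoc_neg_eq_zero_iff {a b : Fin n → R} {t s : R} :
    Fin.snoc a t + G *ᵥ Fin.snoc b (-s) = 0 ↔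
      Fin.snoc a t + G *ᵥ Fin.snoc b 0 = s • G.col (Fin.last n) := by
  rw [mulVec_snoc_neg, ← add_sub_assoc, sub_eq_zero]

lemma dotProduct_sub_dotProduct_eq (hG : G.IsSymm) {a b a' b' : Fin n → R} {t s t' s' : R}
    (h : Fin.snoc a t + G *ᵥ Fin.snoc b 0 = s • G.col (Fin.last n))
    (h' : Fin.snoc a' t' + G *ᵥ Fin.snoc b' 0 = s' • G.col (Fin.last n)) :
    a ⬝ᵥ b' - a' ⬝ᵥ b = t * s' - t' * s := by
  have isotropy := dotProduct_eq_of_add_mulVec_eq_zero hG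
    (snoc_add_mulVec_snoc_neg_eq_zero_iff.mpr h) (snoc_add_mulVec_snoc_neg_eq_zero_iff.mpr h')
  rw [snoc_dotProduct_snoc, snoc_dotProduct_snoc] at isotropy
  linear_combination isotropy

/-- The player group `J` can perfectly reconstruct the combination, with coefficients `t` and `s`,
of the two quadratures of the secret. The pairs `(1, 0)` and `(0, 1)` stand for the quadratures
themselves, and the last index of `G` for the secret. -/
def Reconstructs (G : Matrix (Fin (n + 1)) (Fin (n + 1)) R) (J : Finset (Fin n)) (t s : R) : Prop :=
  ∃ a b : Fin n → R, (∀ l, l ∉ J → a l = 0) ∧ (∀ l, l ∉ J → b l = 0) ∧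
    Fin.snoc a t + G *ᵥ Fin.snoc b 0 = s • G.col (Fin.last n)

lemma reconstructs_one_zero_iff {J : Finset (Fin n)} :
    Reconstructs G J 1 0 ↔ ∃ a b : Fin n → R,
      (∀ l, l ∉ J → a l = 0) ∧ (∀ l, l ∉ J → b l = 0) ∧
      Fin.snoc a 1 + G *ᵥ Fin.snoc b 0 = 0 := by
  rw [Reconstructs, zero_smul]

lemma reconstructs_zero_one_iff {J : Finset (Fin n)} :
    Reconstructs G J 0 1 ↔ ∃ a b : Fin n → R,
      (∀ l, l ∉ J → a l = 0) ∧ (∀ l, l ∉ J → b l = 0) ∧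
      Fin.snoc a 0 + G *ᵥ Fin.snoc b 0 = fun i ↦ G i (Fin.last n) := by
  rw [Reconstructs, one_smul, col_apply']

theorem stmt15_general (hG : G.IsSymm) {J K : Finset (Fin n)} (hJK : Disjoint J K)
    {t s t' s' : R} (hJ : Reconstructs G J t s) (hK : Reconstructs G K t' s') :
    t * s' = t' * s := by
  obtain ⟨a, b, ha, hb, hab⟩ := hJ
  obtain ⟨a', b', ha', hb', hab'⟩ := hK
  have commutator := dotProduct_sub_dotProduct_eq hG hab hab'
  rw [dotProduct_eq_zero_of_disjoint hJK ha hb',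
    dotProduct_eq_zero_of_disjoint hJK.symm ha' hb, sub_zero] at commutator
  exact sub_eq_zero.mp commutator.symm

end CommRing

/-- Let `n ≥ 1`, let `G` be a real symmetric `(n+1) × (n+1)` matrix with last
column `g`, and let `J` and `K` be disjoint subsets of `{1,…,n}`.  Suppose the player group `J`
can perfectly reconstruct both quadratures of the quantum secret, i.e. there exist `a, b ∈ ℝ^n`
supported on `J` with `(a;1) + G(b;0) = 0` and there exist `a', b' ∈ ℝ^n` supported on `J` with
`(a';0) + G(b';0) = g`.  Then the disjoint group `K` can reconstruct neither quadrature: there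
are no `a, b ∈ ℝ^n` supported on `K` with `(a;1) + G(b;0) = 0`, and no `a', b' ∈ ℝ^n` supported
on `K` with `(a';0) + G(b';0) = g`. -/
theorem stmt15 (n : ℕ) (hn : 1 ≤ n)
    (G : Matrix (Fin (n + 1)) (Fin (n + 1)) ℝ) (hG : G.IsSymm)
    (J K : Finset (Fin n)) (hJK : Disjoint J K)
    (hx : ∃ a b : Fin n → ℝ,
      (∀ l, l ∉ J → a l = 0) ∧ (∀ l, l ∉ J → b l = 0) ∧
      Fin.snoc a 1 + G.mulVec (Fin.snoc b 0) = 0)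
    (hp : ∃ a' b' : Fin n → ℝ,
      (∀ l, l ∉ J → a' l = 0) ∧ (∀ l, l ∉ J → b' l = 0) ∧
      Fin.snoc a' 0 + G.mulVec (Fin.snoc b' 0) = (fun i => G i (Fin.last n))) :
    (¬ ∃ a b : Fin n → ℝ,
      (∀ l, l ∉ K → a l = 0) ∧ (∀ l, l ∉ K → b l = 0) ∧
      Fin.snoc a 1 + G.mulVec (Fin.snoc b 0) = 0) ∧
    (¬ ∃ a' b' : Fin n → ℝ,
      (∀ l, l ∉ K → a' l = 0) ∧ (∀ l, l ∉ K → b' l = 0) ∧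
      Fin.snoc a' 0 + G.mulVec (Fin.snoc b' 0) = (fun i => G i (Fin.last n))) := by
  rw [← reconstructs_one_zero_iff] at hx ⊢
  rw [← reconstructs_zero_one_iff] at hp ⊢
  exact ⟨fun hK ↦ by simpa using stmt15_general hG hJK hp hK,
    fun hK ↦ by simpa using stmt15_general hG hJK hx hK⟩
end
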